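/- arXiv:2503.23661 — 3 statements merged into one kernel-verified Lean document; each statement's English description precedes it below -/
import Mathlib

section
/- For every m ≥ 1, the number of walks of length m in ℤ² starting at (2,1) with allowed steps from (a,b) to (b+1,i) for 1 ≤ i ≤ a equals C_{⌊m/2⌋+1} · C_{⌈m/2⌉+1}, where C_n denotes the n-th Catalan number. -/
/-- One allowed step of the walk: from `(a,b)` one may move to `(b+1,i)` with `1 ≤ i ≤ a`. -/
def WalkStep (p q : ℤ × ℤ) : Prop := q.1 = p.2 + 1 ∧ 1 ≤ q.2 ∧ q.2 ≤ p.1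

/-- `l` is the list of points `p_0, …, p_m` of a walk of length `m` in `ℤ²`
starting at `(2,1)` with the allowed steps. -/
def IsWalk (m : ℕ) (l : List (ℤ × ℤ)) : Prop :=
  l.length = m + 1 ∧ l.head? = some (2, 1) ∧ l.Chain' WalkStep

/-- The number of walks of length `m`. -/
noncomputable def walkCount (m : ℕ) : ℕ :=
  Nat.card {l : List (ℤ × ℤ) // IsWalk m l}

/-- `W_m(a,b)`: the number of walks of length `m` ending at the point `(a,b)`. -/
noncomputable def walkCountEnd (m : ℕ) (a b : ℤ) : ℕ :=
  Nat.card {l : List (ℤ × ℤ) // IsWalk m l ∧ l.getLast? = some (a, b)}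

/-- Walks of length `n` starting from `p`. -/
def WFrom (n : ℕ) (p : ℤ × ℤ) (l : List (ℤ × ℤ)) : Prop :=
  l.length = n + 1 ∧ l.head? = some p ∧ l.Chain' WalkStep

/-- Number of sequences with `n` free terms, the first one being at most `a`. -/
def seqF : ℕ → ℕ → ℕ
  | 0, _ => 1
  | n + 1, a => ∑ j : Fin a, seqF n (j.1 + 2)

def stepMap (n a b : ℕ) :
    (Σ j : Fin a, {l : List (ℤ × ℤ) // WFrom n ((b + 1 : ℕ), (j.1 + 1 : ℕ)) l}) →
      {l : List (ℤ × ℤ) // WFrom (n + 1) ((a : ℤ), (b : ℤ)) l} :=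
  fun x => ⟨((a : ℤ), (b : ℤ)) :: x.2.1, by
    obtain ⟨j, l, h1, h2, h3⟩ := x
    refine ⟨by simpa using h1, rfl, ?_⟩
    refine List.isChain_cons.2 ⟨?_, h3⟩
    intro y hy
    simp only [h2, Option.mem_def, Option.some.injEq] at hy
    subst hy
    have := j.2
    refine ⟨by simp, ?_, ?_⟩ <;> simp only <;> omega⟩

lemma stepMap_bij (n a b : ℕ) : Function.Bijective (stepMap n a b) := by
  constructor
  · rintro ⟨j, l, h1, h2, h3⟩ ⟨j', l', h1', h2', h3'⟩ h
    have hl : l = l' := by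
      have := congrArg Subtype.val h
      simpa [stepMap] using this
    subst hl
    have hj : j = j' := by
      rw [h2] at h2'
      simp only [Option.some.injEq, Prod.mk.injEq] at h2'
      apply Fin.ext
      omega
    subst hj
    rfl
  · rintro ⟨l, h1, h2, h3⟩
    match l, h1, h2, h3 with
    | [x], h1, _, _ => simp at h1
    | x :: y :: l, h1, h2, h3 =>
      simp only [List.head?_cons, Option.some.injEq] at h2
      subst h2
      have h3' := List.isChain_cons_cons.1 h3
      obtain ⟨⟨h4, h5, h6⟩, h7⟩ := h3'
      obtain ⟨y1, y2⟩ := y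
      simp only at h4 h5 h6
      refine ⟨⟨⟨(y2 - 1).toNat, by omega⟩, ⟨(y1, y2) :: l, by simpa using h1, ?_, h7⟩⟩, rfl⟩
      simp only [List.head?_cons, Option.some.injEq, Prod.mk.injEq]
      omega

lemma wfrom_card (n : ℕ) : ∀ a b : ℕ,
    Finite {l : List (ℤ × ℤ) // WFrom n ((a : ℤ), (b : ℤ)) l} ∧
    Nat.card {l : List (ℤ × ℤ) // WFrom n ((a : ℤ), (b : ℤ)) l}
      = seqF ((n + 1) / 2) a * seqF (n / 2) (b + 1) := by
  induction n with
  | zero =>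
    intro a b
    have hu : ∀ l, WFrom 0 ((a : ℤ), (b : ℤ)) l ↔ l = [((a : ℤ), (b : ℤ))] := by
      intro l
      constructor
      · rintro ⟨h1, h2, -⟩
        obtain ⟨x, rfl⟩ := List.length_eq_one_iff.1 h1
        simpa using h2
      · rintro rfl
        exact ⟨rfl, rfl, List.isChain_singleton _⟩
    simp only [hu]
    refine ⟨inferInstance, ?_⟩
    simp [seqF]
  | succ n ih =>
    intro a b
    have e := Equiv.ofBijective _ (stepMap_bij n a b)
    have hf : ∀ j : Fin a,
        Finite {l : List (ℤ × ℤ) // WFrom n ((b + 1 : ℕ), (j.1 + 1 : ℕ)) l} :=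
      fun j => (ih _ _).1
    refine ⟨Finite.of_equiv _ e, ?_⟩
    rw [← Nat.card_congr e, Nat.card_sigma]
    have h2 : (n + 1 + 1) / 2 = n / 2 + 1 := by omega
    rw [h2, seqF, Finset.sum_mul]
    refine Finset.sum_congr rfl fun j _ => ?_
    rw [(ih _ _).2, mul_comm]

lemma seqF_succ_succ (n a : ℕ) : seqF (n + 1) (a + 1) = seqF (n + 1) a + seqF n (a + 2) := by
  simp [seqF, Fin.sum_univ_castSucc]

lemma seqF_closed (n : ℕ) : ∀ a, seqF (n + 1) a + (2 * n + a + 1).choose n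
    = (2 * n + a + 1).choose (n + 1) := by
  induction n with
  | zero => intro a; simp [seqF]
  | succ n ih =>
    intro a
    induction a with
    | zero =>
      have : seqF (n + 1 + 1) 0 = 0 := by simp [seqF]
      rw [this, zero_add]
      exact Nat.choose_symm_of_eq_add (by omega)
    | succ a iha =>
      have h := ih (a + 2)
      rw [seqF_succ_succ]
      have e1 : 2 * (n + 1) + (a + 1) + 1 = (2 * (n + 1) + a + 1) + 1 := by ring
      have e2 : 2 * n + (a + 2) + 1 = 2 * (n + 1) + a + 1 := by ring
      rw [e2] at h
      rw [e1, Nat.choose_succ_succ', Nat.choose_succ_succ' _ (n + 1)]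
      omega

lemma seqF_two (n : ℕ) : seqF n 2 = catalan (n + 1) := by
  have h0 : seqF (n + 1) 1 = seqF n 2 := by simp [seqF]
  have h := seqF_closed n 1
  rw [h0] at h
  have hc := succ_mul_catalan_eq_centralBinom (n + 1)
  rw [Nat.centralBinom_eq_two_mul_choose] at hc
  have hr := Nat.choose_succ_right_eq (2 * n + 1 + 1) n
  have e : 2 * n + 1 + 1 - n = n + 2 := by omega
  have e2 : 2 * (n + 1) = 2 * n + 1 + 1 := by ring
  rw [e] at hr
  rw [e2] at hc
  apply Nat.eq_of_mul_eq_mul_left (show 0 < n + 1 + 1 by omega)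
  rw [hc]
  nlinarith

/-- Theorem: the number of walks of length `m` equals `C_{⌊m/2⌋+1} · C_{⌈m/2⌉+1}`. -/
theorem stmt11 (m : ℕ) (hm : 1 ≤ m) :
    walkCount m = catalan (m / 2 + 1) * catalan ((m + 1) / 2 + 1) := by
  have h := (wfrom_card m 2 1).2
  rw [seqF_two, seqF_two] at h
  rw [mul_comm]
  exact h
end

section
/- Let (a,b) ∈ ℤ² be the position reached after m steps of a walk of length at least m (walks start at (2,1) and step from (a,b) to (b+1,i) for some 1 ≤ i ≤ a). Then 2 ≤ a ≤ ⌊(m+4)/2⌋ and 1 ≤ b ≤ ⌈(m+2)/2⌉. -/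
/-- Lemma: if `(a,b)` is the position reached after `m` steps of a walk of length
at least `m`, then `2 ≤ a ≤ ⌊(m+4)/2⌋` and `1 ≤ b ≤ ⌈(m+2)/2⌉`. -/
theorem stmt12 (m m' : ℕ) (hm : m ≤ m') (l : List (ℤ × ℤ)) (hl : IsWalk m' l)
    (a b : ℤ) (hab : l[m]? = some (a, b)) :
    2 ≤ a ∧ a ≤ (((m + 4) / 2 : ℕ) : ℤ) ∧ 1 ≤ b ∧ b ≤ (((m + 3) / 2 : ℕ) : ℤ) := by
  obtain ⟨hlen, hhead, hch⟩ := hl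
  have hch' := List.isChain_iff_getElem.mp hch
  induction m generalizing a b with
  | zero =>
    rw [List.head?_eq_getElem?, hab] at hhead
    simp only [Option.some.injEq, Prod.mk.injEq] at hhead
    obtain ⟨rfl, rfl⟩ := hhead
    norm_num
  | succ k ih =>
    have hk : k + 1 < l.length := by omega
    obtain ⟨h1, h2, h3⟩ := hch' k hk
    have h := ih (by omega) l[k].1 l[k].2 (by simp [List.getElem?_eq_getElem (show k < l.length by omega)])
    rw [List.getElem?_eq_getElem hk] at hab
    simp only [Option.some.injEq] at hab
    rw [hab] at h1 h2 h3
    simp only at h1 h2 h3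
    omega
end

section
/- Let W_m(a,b) denote the number of walks of length m ending at the point (a,b), and let T(n,k) denote the entries of Catalan's triangle. Then for every m ≥ 2: (i) for all integers i with 2 ≤ i ≤ ⌊(m+4)/2⌋, W_m(i, ⌈(m+2)/2⌉) = T(⌊m/2⌋, ⌊(m+4)/2⌋ − i); and (ii) for all integers j with 1 ≤ j ≤ ⌈(m+2)/2⌉, W_m(⌊(m+4)/2⌋, j) = T(⌈m/2⌉, ⌈(m+2)/2⌉ − j). That is, the last column of the walk-count matrix equals the ⌊m/2⌋-th row of Catalan's triangle (reversed) and the last row equals the ⌈m/2⌉-th row of Catalan's triangle (reversed). -/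
/-- Catalan's triangle: `T(0,0) = 1` and `T(n,k) = Σ_{ℓ=0}^{k} T(n−1,ℓ)` for
`0 ≤ k ≤ n` (entries outside the triangle are `0`). -/
def catalanTriangle : ℕ → ℕ → ℕ
  | 0, 0 => 1
  | 0, _ + 1 => 0
  | n + 1, k =>
      if k ≤ n + 1 then ∑ l ∈ Finset.range (k + 1), catalanTriangle n l else 0

theorem walk_zero (l : List (ℤ × ℤ)) (a b : ℤ) :
    (IsWalk 0 l ∧ l.getLast? = some (a, b)) ↔ (l = [(2, 1)] ∧ a = 2 ∧ b = 1) := by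
  constructor
  · rintro ⟨⟨h1, h2, h3⟩, h4⟩
    obtain ⟨x, rfl⟩ := List.length_eq_one_iff.1 (by simpa using h1)
    simp at h2 h4
    subst h2
    simp at h4
    simp [h4]
  · rintro ⟨rfl, rfl, rfl⟩
    refine ⟨⟨by simp, by simp, ?_⟩, by simp⟩
    exact List.isChain_singleton _

theorem walk_succ (m : ℕ) (l : List (ℤ × ℤ)) (a b : ℤ) :
    (IsWalk (m + 1) l ∧ l.getLast? = some (a, b)) ↔
      ∃ a' l', l = l' ++ [(a, b)] ∧ (IsWalk m l' ∧ l'.getLast? = some (a', a - 1)) ∧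
        1 ≤ b ∧ b ≤ a' := by
  constructor
  · rintro ⟨⟨h1, h2, h3⟩, h4⟩
    obtain ⟨l', rfl⟩ := List.getLast?_eq_some_iff.1 h4
    have h1' : l'.length = m + 1 := by simpa using h1
    have hne : l' ≠ [] := by rintro rfl; simp at h1'
    have h3' := List.isChain_append.1 h3
    obtain ⟨⟨x, y⟩, hx⟩ : ∃ p, l'.getLast? = some p :=
      ⟨_, List.getLast?_eq_some_getLast hne⟩
    have hs := h3'.2.2 (x, y) hx (a, b) (by simp)
    obtain ⟨s1, s2, s3⟩ := hs
    simp only at s1 s2 s3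
    refine ⟨x, l', rfl, ⟨⟨h1', ?_, h3'.1⟩, ?_⟩, s2, s3⟩
    · rwa [List.head?_append_of_ne_nil _ hne] at h2
    · rw [hx, s1]; simp
  · rintro ⟨a', l', rfl, ⟨⟨h1, h2, h3⟩, h4⟩, h5, h6⟩
    have hne : l' ≠ [] := by rintro rfl; simp at h1
    refine ⟨⟨by simp [h1], ?_, ?_⟩, by simp⟩
    · rwa [List.head?_append_of_ne_nil _ hne]
    · refine List.isChain_append.2 ⟨h3, List.isChain_singleton _, ?_⟩
      intro x hx y hy
      rw [h4] at hx
      simp at hx hy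
      subst hx hy
      exact ⟨by simp, h5, h6⟩

theorem walk_bound (m : ℕ) : ∀ (l : List (ℤ × ℤ)) (a b : ℤ),
    IsWalk m l ∧ l.getLast? = some (a, b) →
      2 ≤ a ∧ a ≤ (m + 4) / 2 ∧ 1 ≤ b ∧ b ≤ (m + 3) / 2 := by
  induction m with
  | zero =>
    intro l a b h
    obtain ⟨-, rfl, rfl⟩ := (walk_zero l a b).1 h
    norm_num
  | succ m ih =>
    intro l a b h
    obtain ⟨a', l', -, h, h1, h2⟩ := (walk_succ m l a b).1 h
    have := ih _ _ _ h
    push_cast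
    omega

noncomputable def walkFin : ℕ → ℤ → ℤ → Finset (List (ℤ × ℤ))
  | 0, a, b => if a = 2 ∧ b = 1 then {[(2, 1)]} else ∅
  | m + 1, a, b => if 1 ≤ b then
      (Finset.Icc b (((m + 4) / 2 : ℕ) : ℤ)).biUnion
        (fun a' => (walkFin m a' (a - 1)).image (fun l => l ++ [(a, b)]))
      else ∅

theorem mem_walkFin (m : ℕ) : ∀ (l : List (ℤ × ℤ)) (a b : ℤ),
    l ∈ walkFin m a b ↔ (IsWalk m l ∧ l.getLast? = some (a, b)) := by
  induction m with
  | zero =>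
    intro l a b
    rw [walk_zero, walkFin]
    split_ifs with h <;> simp [h]
  | succ m ih =>
    intro l a b
    rw [walk_succ, walkFin]
    split_ifs with h
    · simp only [Finset.mem_biUnion, Finset.mem_Icc, Finset.mem_image, ih]
      constructor
      · rintro ⟨a', ⟨h1, h2⟩, l', hl, rfl⟩
        exact ⟨a', l', rfl, hl, h, h1⟩
      · rintro ⟨a', l', rfl, hl, -, h1⟩
        have := walk_bound _ _ _ _ hl
        exact ⟨a', ⟨h1, by push_cast; omega⟩, l', hl, rfl⟩
    · simp only [Finset.notMem_empty, false_iff]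
      rintro ⟨a', l', rfl, hl, h1, -⟩
      exact h h1

theorem walkCountEnd_eq (m : ℕ) (a b : ℤ) : walkCountEnd m a b = (walkFin m a b).card := by
  unfold walkCountEnd
  rw [Nat.card_congr (Equiv.subtypeEquivRight fun l => (mem_walkFin m l a b).symm)]
  simp

theorem count_zero' (m : ℕ) (a b : ℤ)
    (h : ¬ (2 ≤ a ∧ a ≤ (m + 4) / 2 ∧ 1 ≤ b ∧ b ≤ (m + 3) / 2)) :
    (walkFin m a b).card = 0 := by
  rw [Finset.card_eq_zero, Finset.eq_empty_iff_forall_notMem]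
  intro l hl
  exact h (walk_bound _ _ _ _ ((mem_walkFin _ _ _ _).1 hl))

theorem count_succ (m : ℕ) (a b : ℤ) (hb : 1 ≤ b) :
    (walkFin (m + 1) a b).card =
      ∑ a' ∈ Finset.Icc b (((m + 4) / 2 : ℕ) : ℤ), (walkFin m a' (a - 1)).card := by
  rw [walkFin, if_pos hb, Finset.card_biUnion]
  · refine Finset.sum_congr rfl fun a' _ => ?_
    exact Finset.card_image_of_injective _ (fun x y h => by simpa using h)
  · intro x _ y _ hxy
    rw [Function.onFun, Finset.disjoint_left]
    intro l h1 h2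
    simp only [Finset.mem_image, mem_walkFin] at h1 h2
    obtain ⟨l1, h1, rfl⟩ := h1
    obtain ⟨l2, h2, h3⟩ := h2
    obtain rfl : l2 = l1 := by simpa using h3
    rw [h1.2] at h2
    simp at h2
    exact hxy h2.2

theorem catalanTriangle_out (n k : ℕ) (h : n < k) : catalanTriangle n k = 0 := by
  cases n with
  | zero => cases k with
    | zero => omega
    | succ k => simp [catalanTriangle]
  | succ n => rw [catalanTriangle, if_neg (by omega)]

theorem main_walk (m : ℕ) :
    (∀ i : ℕ, 2 ≤ i → i ≤ (m + 4) / 2 →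
      (walkFin m (i : ℤ) (((m + 3) / 2 : ℕ) : ℤ)).card =
        catalanTriangle (m / 2) ((m + 4) / 2 - i)) ∧
    (∀ j : ℕ, 1 ≤ j → j ≤ (m + 3) / 2 →
      (walkFin m (((m + 4) / 2 : ℕ) : ℤ) (j : ℤ)).card =
        catalanTriangle ((m + 1) / 2) ((m + 3) / 2 - j)) := by
  induction m with
  | zero =>
    constructor
    · intro i h1 h2
      obtain rfl : i = 2 := by omega
      simp [walkFin, catalanTriangle]
    · intro i h1 h2
      obtain rfl : i = 1 := by omega
      simp [walkFin, catalanTriangle]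
  | succ m ih =>
    obtain ⟨ih1, ih2⟩ := ih
    constructor
    · intro i h1 h2
      rw [show (m + 1 + 3) / 2 = (m + 4) / 2 by omega, count_succ _ _ _ (by omega)]
      rw [Finset.Icc_self, Finset.sum_singleton]
      have := ih2 (i - 1) (by omega) (by omega)
      rw [show ((i - 1 : ℕ) : ℤ) = (i : ℤ) - 1 by omega] at this
      rw [this]
      congr 1
      omega
    · intro j h1 h2
      rw [count_succ _ _ _ (by omega)]
      rw [show (((m + 1 + 4) / 2 : ℕ) : ℤ) - 1 = (((m + 3) / 2 : ℕ) : ℤ) by omega]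
      rw [show (m + 1 + 1) / 2 = m / 2 + 1 by omega, catalanTriangle, if_pos (by omega)]
      refine Finset.sum_bij' (fun a _ => (m + 4) / 2 - a.toNat)
        (fun l _ => (((m + 4) / 2 - l : ℕ) : ℤ)) ?_ ?_ ?_ ?_ ?_
      · intro a ha
        simp only [Finset.mem_Icc, Finset.mem_range] at *
        omega
      · intro a ha
        simp only [Finset.mem_Icc, Finset.mem_range] at *
        omega
      · intro a ha
        simp only [Finset.mem_Icc] at *
        omega
      · intro a ha
        simp only [Finset.mem_range] at *
        omega
      · intro a ha
        simp only [Finset.mem_Icc] at ha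
        obtain ⟨k, rfl⟩ := Int.eq_ofNat_of_zero_le (show 0 ≤ a by omega)
        by_cases hk : 2 ≤ k
        · rw [ih1 k hk (by omega)]
          simp
        · rw [count_zero' _ _ _ (by omega), catalanTriangle_out _ _ (by simp; omega)]

/-- Lemma: for `m ≥ 2`, the last column of the walk-count matrix is the
`⌊m/2⌋`-th row of Catalan's triangle (reversed), and the last row is the
`⌈m/2⌉`-th row of Catalan's triangle (reversed). -/
theorem stmt14 (m : ℕ) (hm : 2 ≤ m) :
    (∀ i : ℕ, 2 ≤ i → i ≤ (m + 4) / 2 →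
      walkCountEnd m (i : ℤ) (((m + 3) / 2 : ℕ) : ℤ) =
        catalanTriangle (m / 2) ((m + 4) / 2 - i)) ∧
    (∀ j : ℕ, 1 ≤ j → j ≤ (m + 3) / 2 →
      walkCountEnd m (((m + 4) / 2 : ℕ) : ℤ) (j : ℤ) =
        catalanTriangle ((m + 1) / 2) ((m + 3) / 2 - j)) := by
  simp only [walkCountEnd_eq]
  exact main_walk m
end
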